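/- There exists a constant C > 0, depending only on α and β, such that for every real Dirichlet quasimode datum (u, λ, f) on the stadium S, one has ‖u‖²_{L²(S)} ≤ C ( ∫_{∂S ∩ W} w |∂_N u|² dl + ‖f‖²_{L²(S)} ). -/

import Mathlib

open MeasureTheory Real Set Filter

noncomputable section

/-- Partial derivative in the first (x) variable. -/
def pdx (u : ℝ × ℝ → ℝ) (p : ℝ × ℝ) : ℝ := deriv (fun t => u (t, p.2)) p.1

/-- Partial derivative in the second (y) variable. -/
def pdy (u : ℝ × ℝ → ℝ) (p : ℝ × ℝ) : ℝ := deriv (fun t => u (p.1, t)) p.2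

/-- The positive Laplacian `Δu = -u_xx - u_yy`. -/
def lap (u : ℝ × ℝ → ℝ) (p : ℝ × ℝ) : ℝ := -(pdx (pdx u) p) - (pdy (pdy u) p)

/-- The central rectangle `R = [-α,α] × [-β,β]`. -/
def Rect (α β : ℝ) : Set (ℝ × ℝ) := Icc (-α) α ×ˢ Icc (-β) β

/-- The wings `W = W₊ ∪ W₋`, two half-discs of radius β centered at `(±α, 0)`. -/
def Wings (α β : ℝ) : Set (ℝ × ℝ) :=
  {p | (p.1 - α) ^ 2 + p.2 ^ 2 ≤ β ^ 2 ∧ α ≤ p.1} ∪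
  {p | (p.1 + α) ^ 2 + p.2 ^ 2 ≤ β ^ 2 ∧ p.1 ≤ -α}

/-- The Bunimovich stadium `S = R ∪ W`. -/
def Stadium (α β : ℝ) : Set (ℝ × ℝ) := Rect α β ∪ Wings α β

/-- The boundary `∂S`: two horizontal segments and two semicircles. -/
def StadiumBoundary (α β : ℝ) : Set (ℝ × ℝ) :=
  {p | |p.1| ≤ α ∧ (p.2 = β ∨ p.2 = -β)} ∪
  {p | (|p.1| - α) ^ 2 + p.2 ^ 2 = β ^ 2 ∧ α ≤ |p.1|}

/-- Boundary integral `∫_{∂S} g dl` of an integrand `g` depending on the boundary point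
and the outward unit normal at that point. -/
def bdryInt (α β : ℝ) (g : ℝ × ℝ → ℝ × ℝ → ℝ) : ℝ :=
  (∫ x in (-α)..α, (g (x, β) (0, 1) + g (x, -β) (0, -1))) +
  β * ∫ θ in (-(π / 2))..(π / 2),
    (g (α + β * cos θ, β * sin θ) (cos θ, sin θ) +
     g (-(α + β * cos θ), β * sin θ) (-cos θ, sin θ))

/-- Boundary integral `∫_{∂S ∩ W} g dl` over the two semicircles only. -/
def bdryIntW (α β : ℝ) (g : ℝ × ℝ → ℝ × ℝ → ℝ) : ℝ :=
  β * ∫ θ in (-(π / 2))..(π / 2),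
    (g (α + β * cos θ, β * sin θ) (cos θ, sin θ) +
     g (-(α + β * cos θ), β * sin θ) (-cos θ, sin θ))

/-- The normal derivative `∂_N u = n₁ ∂_x u + n₂ ∂_y u` at a boundary point `p`
with outward unit normal `n`. -/
def nderiv (u : ℝ × ℝ → ℝ) (p n : ℝ × ℝ) : ℝ := n.1 * pdx u p + n.2 * pdy u p

/-- A real Dirichlet quasimode datum `(u, λ, f)` on the stadium: `λ > 0`, `u` smooth on a
neighborhood of `S`, `u = 0` on `∂S`, and `(Δ - λ²) u = f` on `S`. -/
structure QMDatum (α β : ℝ) where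
  u : ℝ × ℝ → ℝ
  lam : ℝ
  f : ℝ × ℝ → ℝ
  lam_pos : 0 < lam
  smooth : ∃ V : Set (ℝ × ℝ), IsOpen V ∧ Stadium α β ⊆ V ∧ ContDiffOn ℝ (⊤ : ℕ∞) u V
  dirichlet : ∀ p ∈ StadiumBoundary α β, u p = 0
  eqn : ∀ p ∈ Stadium α β, lap u p - lam ^ 2 * u p = f p

/-!
Put `F = x (u_x² - u_y² + λ² u²) + u u_x` and `G = 2 x u_x u_y + u u_y`. Integrating
`∂_x F + ∂_y G` over the stadium, i.e. testing the equation against `2 x u_x + u`, gives Rellich's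
identity `∫_S 2 u_x² - (2 x u_x + u) f = ∫_∂S x n₁ |∂_N u|² dl` whenever `u = 0` on `∂S`: there
the gradient is `∂_N u` times the normal. The weight `x n₁` vanishes on the flat sides, and on the
arcs it is at most `((α + β) / β) w`, because `w = β |n₁|` there. The terms containing `f` are
absorbed by Cauchy–Schwarz and the Poincaré inequality `∫_S u² ≤ 4 (α + β)² ∫_S u_x²`, which is
the divergence theorem for the field `(x u², 0)`. A cutoff near `S` makes `u` globally `C²`, so the
divergence theorem is only needed for functions on the whole plane.
-/

section GraphRegions

variable {S : Set (ℝ × ℝ)} {a b : ℝ} {l r : ℝ → ℝ}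

lemma setIntegral_eq_integral_integral_of_mem_iff {E : Type*} [NormedAddCommGroup E]
    [NormedSpace ℝ E] (hab : a ≤ b) (hlr : ∀ x ∈ Icc a b, l x ≤ r x)
    (hS : ∀ p, p ∈ S ↔ p.1 ∈ Icc a b ∧ p.2 ∈ Icc (l p.1) (r p.1)) (hSm : MeasurableSet S)
    {f : ℝ × ℝ → E} (hf : IntegrableOn f S) :
    ∫ p in S, f p = ∫ x in a..b, ∫ y in l x..r x, f (x, y) := by
  have hint : Integrable (S.indicator f) (volume.prod volume) := (integrable_indicator_iff hSm).2 hf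
  have slice (x y : ℝ) : S.indicator f (x, y) =
      (Icc a b).indicator (fun x ↦ (Icc (l x) (r x)).indicator (fun y ↦ f (x, y)) y) x := by
    simp only [indicator, hS]
    split_ifs <;> tauto
  rw [← integral_indicator hSm, Measure.volume_eq_prod, integral_prod _ hint,
    intervalIntegral.integral_of_le hab, ← integral_Icc_eq_integral_Ioc,
    ← integral_indicator measurableSet_Icc]
  refine integral_congr_ae (.of_forall fun x ↦ ?_)
  simp only [slice]
  by_cases hx : x ∈ Icc a b
  · simp only [indicator_of_mem hx]
    rw [integral_indicator measurableSet_Icc, intervalIntegral.integral_of_le (hlr x hx),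
      integral_Icc_eq_integral_Ioc]
  · simp only [indicator_of_notMem hx, integral_zero]

lemma setIntegral_eq_integral_sub_of_hasDerivAt_snd (hab : a ≤ b) (hlr : ∀ x ∈ Icc a b, l x ≤ r x)
    (hS : ∀ p, p ∈ S ↔ p.1 ∈ Icc a b ∧ p.2 ∈ Icc (l p.1) (r p.1)) (hSc : IsCompact S)
    {f f' : ℝ × ℝ → ℝ} (hf' : Continuous f')
    (hd : ∀ x y, HasDerivAt (fun t ↦ f (x, t)) (f' (x, y)) y) :
    ∫ p in S, f' p = ∫ x in a..b, (f (x, r x) - f (x, l x)) := by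
  rw [setIntegral_eq_integral_integral_of_mem_iff hab hlr hS hSc.measurableSet
    (hf'.continuousOn.integrableOn_compact hSc)]
  congr 1 with x
  exact intervalIntegral.integral_eq_sub_of_hasDerivAt (fun y _ ↦ hd x y)
    ((by fun_prop : Continuous fun y ↦ f' (x, y)).intervalIntegrable _ _)

lemma setIntegral_eq_integral_sub_of_hasDerivAt_fst (hab : a ≤ b) (hlr : ∀ y ∈ Icc a b, l y ≤ r y)
    (hS : ∀ p, p ∈ S ↔ p.2 ∈ Icc a b ∧ p.1 ∈ Icc (l p.2) (r p.2)) (hSc : IsCompact S)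
    {f f' : ℝ × ℝ → ℝ} (hf' : Continuous f')
    (hd : ∀ x y, HasDerivAt (fun t ↦ f (t, y)) (f' (x, y)) x) :
    ∫ p in S, f' p = ∫ y in a..b, (f (r y, y) - f (l y, y)) := by
  have hswap : ∫ p in S, f' p = ∫ p in Prod.swap ⁻¹' S, f' p.swap :=
    (Measure.measurePreserving_swap.setIntegral_preimage_emb
      MeasurableEquiv.prodComm.measurableEmbedding f' S).symm
  rw [hswap]
  exact setIntegral_eq_integral_sub_of_hasDerivAt_snd (f := fun p ↦ f p.swap)
    (f' := fun p ↦ f' p.swap) hab hlr (fun p ↦ hS p.swap)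
    ((Homeomorph.prodComm ℝ ℝ).isCompact_preimage.2 hSc)
    (hf'.comp continuous_swap) (fun x y ↦ hd y x)

end GraphRegions

lemma integral_neg_eq_integral_add_integral_comp_neg {φ : ℝ → ℝ} (hφ : Continuous φ) (a b : ℝ) :
    ∫ x in -b..b, φ x = (∫ x in -a..a, φ x) + ∫ x in a..b, (φ x + φ (-x)) := by
  have hi (s t : ℝ) : IntervalIntegrable φ volume s t := hφ.intervalIntegrable s t
  rw [← intervalIntegral.integral_add_adjacent_intervals (hi (-b) (-a)) (hi (-a) b),
    ← intervalIntegral.integral_add_adjacent_intervals (hi (-a) a) (hi a b),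
    intervalIntegral.integral_add (hi a b)
      ((by fun_prop : Continuous fun x ↦ φ (-x)).intervalIntegrable _ _),
    intervalIntegral.integral_comp_neg]
  ring

lemma hasDerivAt_add_mul_cos (a b θ : ℝ) :
    HasDerivAt (fun θ ↦ a + b * cos θ) (-(b * sin θ)) θ := by
  simpa using ((hasDerivAt_cos θ).const_mul b).const_add a

/-- Half the length of the horizontal chord of the stadium at height `y`. -/
def halfWidth (α β y : ℝ) : ℝ := α + √(β ^ 2 - y ^ 2)

/-- Half the length of the vertical chord of the stadium at abscissa `x`. The excess
`max (|x| - α) 0` is the distance from `x` to `[-α, α]`. -/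
def halfHeight (α β x : ℝ) : ℝ := √(β ^ 2 - max (|x| - α) 0 ^ 2)

/-- `OutwardNormal α β p n` says that `n` is the outward unit normal at the boundary point `p` of
the stadium. The four junctions `(±α, ±β)` of the arcs with the sides are left out; they do not
matter in boundary integrals. -/
inductive OutwardNormal (α β : ℝ) : ℝ × ℝ → ℝ × ℝ → Prop
  | top {x : ℝ} (hx : x ∈ Ioo (-α) α) : OutwardNormal α β (x, β) (0, 1)
  | bottom {x : ℝ} (hx : x ∈ Ioo (-α) α) : OutwardNormal α β (x, -β) (0, -1)
  | right {θ : ℝ} (hθ : θ ∈ Ioo (-(π / 2)) (π / 2)) :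
      OutwardNormal α β (α + β * cos θ, β * sin θ) (cos θ, sin θ)
  | left {θ : ℝ} (hθ : θ ∈ Ioo (-(π / 2)) (π / 2)) :
      OutwardNormal α β (-(α + β * cos θ), β * sin θ) (-cos θ, sin θ)

section Geometry

variable {α β : ℝ}

@[fun_prop]
lemma continuous_halfWidth : Continuous (halfWidth α β) := by
  unfold halfWidth; fun_prop

@[fun_prop]
lemma continuous_halfHeight : Continuous (halfHeight α β) := by
  unfold halfHeight; fun_prop

lemma halfHeight_neg (x : ℝ) : halfHeight α β (-x) = halfHeight α β x := by
  simp only [halfHeight, abs_neg]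

lemma halfHeight_of_abs_le (hβ : 0 ≤ β) {x : ℝ} (hx : |x| ≤ α) : halfHeight α β x = β := by
  simp [halfHeight, max_eq_right (sub_nonpos.2 hx), hβ]

lemma halfHeight_add_mul_cos (hα : 0 ≤ α) (hβ : 0 ≤ β) {θ : ℝ} (hθ : 0 ≤ cos θ) :
    halfHeight α β (α + β * cos θ) = β * |sin θ| := by
  have hcos : 0 ≤ β * cos θ := mul_nonneg hβ hθ
  rw [halfHeight, abs_of_nonneg (by positivity), add_sub_cancel_left, max_eq_left hcos,
    show β ^ 2 - (β * cos θ) ^ 2 = (β * sin θ) ^ 2 by rw [mul_pow, mul_pow, sin_sq]; ring,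
    sqrt_sq_eq_abs, abs_mul, abs_of_nonneg hβ]

lemma halfWidth_mul_sin (hβ : 0 ≤ β) {θ : ℝ} (hθ : 0 ≤ cos θ) :
    halfWidth α β (β * sin θ) = α + β * cos θ := by
  rw [halfWidth,
    show β ^ 2 - (β * sin θ) ^ 2 = (β * cos θ) ^ 2 by rw [mul_pow, mul_pow, cos_sq']; ring,
    sqrt_sq (mul_nonneg hβ hθ)]

lemma mem_stadium_iff (hα : 0 ≤ α) (hβ : 0 ≤ β) {p : ℝ × ℝ} :
    p ∈ Stadium α β ↔ max (|p.1| - α) 0 ^ 2 + p.2 ^ 2 ≤ β ^ 2 := by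
  obtain ⟨x, y⟩ := p
  have hrect : (x, y) ∈ Rect α β ↔ |x| ≤ α ∧ y ^ 2 ≤ β ^ 2 := by
    simp only [Rect, mem_prod, mem_Icc, ← abs_le, sq_le_sq, abs_of_nonneg hβ]
  have hwings : (x, y) ∈ Wings α β ↔ α ≤ |x| ∧ (|x| - α) ^ 2 + y ^ 2 ≤ β ^ 2 := by
    simp only [Wings, mem_union, mem_ofPred_eq]
    constructor
    · rintro (⟨h, hx⟩ | ⟨h, hx⟩)
      · rw [abs_of_nonneg (hα.trans hx)]
        exact ⟨hx, h⟩
      · rw [abs_of_nonpos (by linarith)]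
        exact ⟨by linarith, by linarith⟩
    · rintro ⟨hx, h⟩
      rcases le_total 0 x with h0 | h0
      · rw [abs_of_nonneg h0] at hx h
        exact Or.inl ⟨h, hx⟩
      · rw [abs_of_nonpos h0] at hx h
        exact Or.inr ⟨by linarith, by linarith⟩
  rw [Stadium, mem_union, hrect, hwings]
  constructor
  · rintro (⟨hx, hy⟩ | ⟨hx, h⟩)
    · simpa [max_eq_right (sub_nonpos.2 hx)] using hy
    · rwa [max_eq_left (sub_nonneg.2 hx)]
  · intro h
    rcases le_total |x| α with hx | hx
    · exact Or.inl ⟨hx, by simpa [max_eq_right (sub_nonpos.2 hx)] using h⟩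
    · exact Or.inr ⟨hx, by rwa [max_eq_left (sub_nonneg.2 hx)] at h⟩

lemma mem_stadium_iff_halfWidth (hα : 0 ≤ α) (hβ : 0 ≤ β) {p : ℝ × ℝ} :
    p ∈ Stadium α β ↔
      p.2 ∈ Icc (-β) β ∧ p.1 ∈ Icc (-halfWidth α β p.2) (halfWidth α β p.2) := by
  have hsqrt := sqrt_nonneg (β ^ 2 - p.2 ^ 2)
  rw [mem_stadium_iff hα hβ, mem_Icc, mem_Icc, ← abs_le, ← abs_le, ← le_sub_iff_add_le, halfWidth,
    ← sub_le_iff_le_add']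
  constructor
  · intro h
    exact ⟨abs_le_of_sq_le_sq (by nlinarith [sq_nonneg (max (|p.1| - α) 0)]) hβ,
      (le_max_left _ _).trans (le_sqrt_of_sq_le h)⟩
  · rintro ⟨hy, hx⟩
    exact (le_sqrt (le_max_right _ _) (sub_nonneg.2 (sq_le_sq' (abs_le.1 hy).1 (abs_le.1 hy).2))).1
      (max_le hx hsqrt)

lemma mem_stadium_iff_halfHeight (hα : 0 ≤ α) (hβ : 0 ≤ β) {p : ℝ × ℝ} :
    p ∈ Stadium α β ↔
      p.1 ∈ Icc (-(α + β)) (α + β) ∧ p.2 ∈ Icc (-halfHeight α β p.1) (halfHeight α β p.1) := by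
  rw [mem_stadium_iff hα hβ, mem_Icc, mem_Icc, ← abs_le, ← abs_le, ← le_sub_iff_add_le', halfHeight,
    ← sub_le_iff_le_add']
  have hm : 0 ≤ max (|p.1| - α) 0 := le_max_right _ _
  constructor
  · intro h
    exact ⟨(le_max_left _ _).trans
      (abs_le_of_sq_le_sq (by nlinarith [sq_nonneg p.2]) hβ |> (le_abs_self _).trans),
      abs_le_sqrt h⟩
  · rintro ⟨hx, hy⟩
    rw [← sq_abs]
    exact (le_sqrt (abs_nonneg _) (sub_nonneg.2 (pow_le_pow_left₀ hm (max_le hx hβ) 2))).1 hy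

lemma sq_fst_le_of_mem_stadium (hα : 0 ≤ α) (hβ : 0 ≤ β) {p : ℝ × ℝ} (hp : p ∈ Stadium α β) :
    p.1 ^ 2 ≤ (α + β) ^ 2 :=
  have hx := ((mem_stadium_iff_halfHeight hα hβ).1 hp).1
  sq_le_sq' hx.1 hx.2

lemma isCompact_stadium (hα : 0 ≤ α) (hβ : 0 ≤ β) : IsCompact (Stadium α β) := by
  have hclosed : IsClosed (Stadium α β) := by
    have heq : Stadium α β = {p | max (|p.1| - α) 0 ^ 2 + p.2 ^ 2 ≤ β ^ 2} :=
      Set.ext fun _ ↦ mem_stadium_iff hα hβ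
    rw [heq]
    exact isClosed_le (by fun_prop) (by fun_prop)
  have hbox : IsCompact (Icc (-(α + β)) (α + β) ×ˢ Icc (-β) β) := isCompact_Icc.prod isCompact_Icc
  exact hbox.of_isClosed_subset hclosed fun p hp ↦
    ⟨((mem_stadium_iff_halfHeight hα hβ).1 hp).1, ((mem_stadium_iff_halfWidth hα hβ).1 hp).1⟩

lemma integrableOn_stadium (hα : 0 ≤ α) (hβ : 0 ≤ β) {f : ℝ × ℝ → ℝ} (hf : Continuous f) :
    IntegrableOn f (Stadium α β) :=
  hf.continuousOn.integrableOn_compact (isCompact_stadium hα hβ)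

lemma stadiumBoundary_subset_stadium (hα : 0 ≤ α) (hβ : 0 ≤ β) :
    StadiumBoundary α β ⊆ Stadium α β := by
  rintro ⟨x, y⟩ (⟨hx, hy⟩ | ⟨hxy, hx⟩) <;> refine (mem_stadium_iff hα hβ).2 ?_
  · rw [max_eq_right (sub_nonpos.2 hx)]
    rcases hy with rfl | rfl <;> simp
  · rw [max_eq_left (sub_nonneg.2 hx)]
    exact hxy.le

end Geometry

section OutwardNormal

variable {α β : ℝ} {p n : ℝ × ℝ} {g h : ℝ × ℝ → ℝ × ℝ → ℝ}

namespace OutwardNormal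

lemma mem_stadiumBoundary (hα : 0 ≤ α) (hβ : 0 ≤ β) (hn : OutwardNormal α β p n) :
    p ∈ StadiumBoundary α β := by
  have arc {θ : ℝ} (hθ : θ ∈ Ioo (-(π / 2)) (π / 2)) :
      |α + β * cos θ| = α + β * cos θ ∧ 0 ≤ β * cos θ ∧
        (β * cos θ) ^ 2 + (β * sin θ) ^ 2 = β ^ 2 := by
    have hcos : 0 ≤ β * cos θ := mul_nonneg hβ (cos_pos_of_mem_Ioo hθ).le
    exact ⟨abs_of_nonneg (by positivity), hcos,
      by linear_combination β ^ 2 * sin_sq_add_cos_sq θ⟩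
  cases hn with
  | top hx => exact Or.inl ⟨(abs_lt.2 hx).le, Or.inl rfl⟩
  | bottom hx => exact Or.inl ⟨(abs_lt.2 hx).le, Or.inr rfl⟩
  | right hθ =>
    obtain ⟨habs, hcos, hsq⟩ := arc hθ
    right
    simpa [habs] using ⟨hsq, hcos⟩
  | left hθ =>
    obtain ⟨habs, hcos, hsq⟩ := arc hθ
    right
    simp only [mem_ofPred_eq, abs_neg]
    simpa [habs] using ⟨hsq, hcos⟩

lemma sq_add_sq (hn : OutwardNormal α β p n) : n.1 ^ 2 + n.2 ^ 2 = 1 := by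
  cases hn <;> simp

lemma exists_tangent_curve (hα : 0 ≤ α) (hβ : 0 < β) (hn : OutwardNormal α β p n) :
    ∃ (γ : ℝ → ℝ × ℝ) (t c : ℝ), γ t = p ∧ c ≠ 0 ∧ HasDerivAt γ (c • (-n.2, n.1)) t ∧
      ∀ᶠ s in nhds t, γ s ∈ StadiumBoundary α β := by
  have hsin (θ : ℝ) : HasDerivAt (fun θ ↦ β * sin θ) (β * cos θ) θ :=
    (hasDerivAt_sin θ).const_mul β
  cases hn with
  | @top x hx =>
    refine ⟨fun s ↦ (s, β), x, -1, rfl, by norm_num, ?_, ?_⟩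
    · simpa using (hasDerivAt_id x).prodMk (hasDerivAt_const x β)
    · filter_upwards [isOpen_Ioo.mem_nhds hx] with s hs
      exact (OutwardNormal.top hs).mem_stadiumBoundary hα hβ.le
  | @bottom x hx =>
    refine ⟨fun s ↦ (s, -β), x, 1, rfl, one_ne_zero, ?_, ?_⟩
    · simpa using (hasDerivAt_id x).prodMk (hasDerivAt_const x (-β))
    · filter_upwards [isOpen_Ioo.mem_nhds hx] with s hs
      exact (OutwardNormal.bottom hs).mem_stadiumBoundary hα hβ.le
  | @right θ hθ =>
    refine ⟨fun s ↦ (α + β * cos s, β * sin s), θ, β, rfl, hβ.ne', ?_, ?_⟩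
    · simpa using (hasDerivAt_add_mul_cos α β θ).prodMk (hsin θ)
    · filter_upwards [isOpen_Ioo.mem_nhds hθ] with s hs
      exact (OutwardNormal.right hs).mem_stadiumBoundary hα hβ.le
  | @left θ hθ =>
    refine ⟨fun s ↦ (-(α + β * cos s), β * sin s), θ, -β, rfl, neg_ne_zero.2 hβ.ne', ?_, ?_⟩
    · simpa using (hasDerivAt_add_mul_cos α β θ).neg.prodMk (hsin θ)
    · filter_upwards [isOpen_Ioo.mem_nhds hθ] with s hs
      exact (OutwardNormal.left hs).mem_stadiumBoundary hα hβ.le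

end OutwardNormal

lemma bdryIntW_congr (h_eq : ∀ p n, OutwardNormal α β p n → g p n = h p n) :
    bdryIntW α β g = bdryIntW α β h := by
  unfold bdryIntW
  congr 1
  refine intervalIntegral.integral_congr_Ioo_of_le (by linarith [pi_pos]) fun θ hθ ↦ ?_
  simp only [h_eq _ _ (.right hθ), h_eq _ _ (.left hθ)]

lemma bdryInt_congr (hα : 0 ≤ α) (h_eq : ∀ p n, OutwardNormal α β p n → g p n = h p n) :
    bdryInt α β g = bdryInt α β h := by
  change _ + bdryIntW α β g = _ + bdryIntW α β h
  rw [bdryIntW_congr h_eq]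
  congr 1
  refine intervalIntegral.integral_congr_Ioo_of_le (by linarith) fun x hx ↦ ?_
  simp only [h_eq _ _ (.top hx), h_eq _ _ (.bottom hx)]

lemma bdryIntW_weight_mul_nonneg (hα : 0 ≤ α) (hβ : 0 ≤ β) (hg : ∀ p n, 0 ≤ g p n) :
    0 ≤ bdryIntW α β (fun p n ↦ (|p.1| - α) * g p n) := by
  refine mul_nonneg hβ (intervalIntegral.integral_nonneg (by linarith [pi_pos]) fun θ hθ ↦ ?_)
  have hcos : 0 ≤ β * cos θ := mul_nonneg hβ (cos_nonneg_of_mem_Icc hθ)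
  simp only [abs_neg, abs_of_nonneg (add_nonneg hα hcos), add_sub_cancel_left]
  exact add_nonneg (mul_nonneg hcos (hg _ _)) (mul_nonneg hcos (hg _ _))

lemma bdryInt_fst_mul_normal_le (hα : 0 ≤ α) (hβ : 0 < β)
    (hgc : Continuous fun q : (ℝ × ℝ) × ℝ × ℝ ↦ g q.1 q.2) (hg : ∀ p n, 0 ≤ g p n) :
    bdryInt α β (fun p n ↦ p.1 * n.1 * g p n) ≤
      (α + β) / β * bdryIntW α β (fun p n ↦ (|p.1| - α) * g p n) := by
  have hright : Continuous fun θ ↦ g (α + β * cos θ, β * sin θ) (cos θ, sin θ) :=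
    hgc.comp (by fun_prop :
      Continuous fun θ ↦ ((α + β * cos θ, β * sin θ), (cos θ, sin θ)))
  have hleft : Continuous fun θ ↦ g (-(α + β * cos θ), β * sin θ) (-cos θ, sin θ) :=
    hgc.comp (by fun_prop :
      Continuous fun θ ↦ ((-(α + β * cos θ), β * sin θ), (-cos θ, sin θ)))
  have hflat : ∫ x in -α..α, (x * 0 * g (x, β) (0, 1) + x * 0 * g (x, -β) (0, -1)) = 0 := by simp
  simp only [bdryInt, bdryIntW, hflat, zero_add]
  rw [mul_left_comm]
  refine mul_le_mul_of_nonneg_left ?_ hβ.le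
  rw [← intervalIntegral.integral_const_mul]
  refine intervalIntegral.integral_mono_on (by linarith [pi_pos])
    (Continuous.intervalIntegrable (.add (.mul (by fun_prop) hright)
      (.mul (by fun_prop) hleft)) _ _)
    (Continuous.intervalIntegrable (.mul continuous_const (.add (.mul (by fun_prop) hright)
      (.mul (by fun_prop) hleft))) _ _) fun θ hθ ↦ ?_
  have hcos : 0 ≤ cos θ := cos_nonneg_of_mem_Icc hθ
  have hx : α + β * cos θ ≤ α + β := by linarith [mul_le_of_le_one_right hβ.le (cos_le_one θ)]
  simp only [abs_neg, abs_of_nonneg (show 0 ≤ α + β * cos θ by positivity), add_sub_cancel_left]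
  set gr := g (α + β * cos θ, β * sin θ) (cos θ, sin θ)
  set gl := g (-(α + β * cos θ), β * sin θ) (-cos θ, sin θ)
  calc (α + β * cos θ) * cos θ * gr + -(α + β * cos θ) * -cos θ * gl
    _ = (α + β * cos θ) * (cos θ * (gr + gl)) := by ring
    _ ≤ (α + β) * (cos θ * (gr + gl)) :=
      mul_le_mul_of_nonneg_right hx (mul_nonneg hcos (add_nonneg (hg _ _) (hg _ _)))
    _ = (α + β) / β * (β * cos θ * gr + β * cos θ * gl) := by field_simp

end OutwardNormal

section Divergence

variable {α β : ℝ} {F F' G G' : ℝ × ℝ → ℝ}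

lemma setIntegral_stadium_of_hasDerivAt_fst (hα : 0 ≤ α) (hβ : 0 ≤ β) (hF : Continuous F)
    (hF' : Continuous F') (hd : ∀ x y, HasDerivAt (fun t ↦ F (t, y)) (F' (x, y)) x) :
    ∫ p in Stadium α β, F' p =
      β * ∫ θ in -(π / 2)..π / 2, cos θ *
        (F (α + β * cos θ, β * sin θ) - F (-(α + β * cos θ), β * sin θ)) := by
  have hw (y : ℝ) : 0 ≤ halfWidth α β y := add_nonneg hα (sqrt_nonneg _)
  have hsub := intervalIntegral.integral_comp_mul_deriv (a := -(π / 2)) (b := π / 2)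
    (f := fun θ ↦ β * sin θ) (f' := fun θ ↦ β * cos θ)
    (g := fun y ↦ F (halfWidth α β y, y) - F (-halfWidth α β y, y))
    (fun θ _ ↦ (hasDerivAt_sin θ).const_mul β) (by fun_prop) (by fun_prop)
  simp only [sin_neg, sin_pi_div_two, mul_neg, mul_one] at hsub
  rw [setIntegral_eq_integral_sub_of_hasDerivAt_fst (by linarith) (fun y _ ↦ neg_le_self (hw y))
    (fun p ↦ mem_stadium_iff_halfWidth hα hβ) (isCompact_stadium hα hβ) hF' hd, ← hsub,
    ← intervalIntegral.integral_const_mul]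
  refine intervalIntegral.integral_congr_Ioo_of_le (by linarith [pi_pos]) fun θ hθ ↦ ?_
  simp only [Function.comp_apply, halfWidth_mul_sin hβ (cos_pos_of_mem_Ioo hθ).le]
  ring

lemma integral_upper_boundary (hα : 0 ≤ α) (hβ : 0 ≤ β) (hG : Continuous G) :
    ∫ x in -(α + β)..α + β, G (x, halfHeight α β x) =
      (∫ x in -α..α, G (x, β)) + β * ∫ θ in 0..π / 2, sin θ *
        (G (α + β * cos θ, β * sin θ) + G (-(α + β * cos θ), β * sin θ)) := by
  have hflat : ∫ x in -α..α, G (x, halfHeight α β x) = ∫ x in -α..α, G (x, β) := by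
    refine intervalIntegral.integral_congr_Ioo_of_le (by linarith) fun x hx ↦ ?_
    simp only [halfHeight_of_abs_le hβ (abs_lt.2 hx).le]
  have hsub := intervalIntegral.integral_comp_mul_deriv (a := 0) (b := π / 2)
    (f := fun θ ↦ α + β * cos θ) (f' := fun θ ↦ -(β * sin θ))
    (g := fun x ↦ G (x, halfHeight α β x) + G (-x, halfHeight α β x))
    (fun θ _ ↦ hasDerivAt_add_mul_cos α β θ) (by fun_prop) (by fun_prop)
  simp only [cos_zero, cos_pi_div_two, mul_zero, mul_one, add_zero] at hsub
  rw [integral_neg_eq_integral_add_integral_comp_neg (by fun_prop) α, hflat]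
  simp only [halfHeight_neg]
  rw [intervalIntegral.integral_symm (α + β) α, ← hsub, ← intervalIntegral.integral_neg,
    ← intervalIntegral.integral_const_mul]
  congr 1
  refine intervalIntegral.integral_congr_Ioo_of_le (by positivity) fun θ hθ ↦ ?_
  have hcos : 0 ≤ cos θ := cos_nonneg_of_mem_Icc ⟨by linarith [hθ.1, pi_pos], hθ.2.le⟩
  have hsin : 0 ≤ sin θ := sin_nonneg_of_nonneg_of_le_pi hθ.1.le (by linarith [hθ.2, pi_pos])
  simp only [Function.comp_apply, halfHeight_add_mul_cos hα hβ hcos, abs_of_nonneg hsin]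
  ring

lemma integral_lower_boundary (hα : 0 ≤ α) (hβ : 0 ≤ β) (hG : Continuous G) :
    ∫ x in -(α + β)..α + β, G (x, -halfHeight α β x) =
      (∫ x in -α..α, G (x, -β)) - β * ∫ θ in -(π / 2)..0, sin θ *
        (G (α + β * cos θ, β * sin θ) + G (-(α + β * cos θ), β * sin θ)) := by
  have hupper := integral_upper_boundary (G := fun p ↦ G (p.1, -p.2)) hα hβ (by fun_prop)
  have hreflect := intervalIntegral.integral_comp_neg (a := 0) (b := π / 2) fun θ ↦
    sin θ * (G (α + β * cos θ, β * sin θ) + G (-(α + β * cos θ), β * sin θ))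
  simp only [cos_neg, sin_neg, neg_mul, mul_neg, neg_zero, intervalIntegral.integral_neg]
    at hreflect
  rw [hupper, ← hreflect]
  ring

lemma setIntegral_stadium_of_hasDerivAt_snd (hα : 0 ≤ α) (hβ : 0 ≤ β) (hG : Continuous G)
    (hG' : Continuous G') (hd : ∀ x y, HasDerivAt (fun t ↦ G (x, t)) (G' (x, y)) y) :
    ∫ p in Stadium α β, G' p = (∫ x in -α..α, (G (x, β) - G (x, -β))) +
      β * ∫ θ in -(π / 2)..π / 2, sin θ *
        (G (α + β * cos θ, β * sin θ) + G (-(α + β * cos θ), β * sin θ)) := by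
  have hi {φ : ℝ → ℝ} (hφ : Continuous φ) (s t : ℝ) : IntervalIntegrable φ volume s t :=
    hφ.intervalIntegrable s t
  have hh (x : ℝ) : 0 ≤ halfHeight α β x := sqrt_nonneg _
  rw [setIntegral_eq_integral_sub_of_hasDerivAt_snd (by linarith)
    (fun x _ ↦ neg_le_self (hh x)) (fun p ↦ mem_stadium_iff_halfHeight hα hβ)
    (isCompact_stadium hα hβ) hG' hd,
    intervalIntegral.integral_sub (hi (by fun_prop) _ _) (hi (by fun_prop) _ _),
    intervalIntegral.integral_sub (hi (by fun_prop) _ _) (hi (by fun_prop) _ _),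
    integral_upper_boundary hα hβ hG, integral_lower_boundary hα hβ hG,
    ← intervalIntegral.integral_add_adjacent_intervals (hi (by fun_prop) (-(π / 2)) 0)
      (hi (by fun_prop) 0 (π / 2))]
  ring

theorem setIntegral_stadium_divergence (hα : 0 ≤ α) (hβ : 0 ≤ β)
    (hF : Continuous F) (hF' : Continuous F') (hG : Continuous G) (hG' : Continuous G')
    (hFd : ∀ x y, HasDerivAt (fun t ↦ F (t, y)) (F' (x, y)) x)
    (hGd : ∀ x y, HasDerivAt (fun t ↦ G (x, t)) (G' (x, y)) y) :
    ∫ p in Stadium α β, (F' p + G' p) = bdryInt α β (fun p n ↦ n.1 * F p + n.2 * G p) := by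
  rw [integral_add (integrableOn_stadium hα hβ hF') (integrableOn_stadium hα hβ hG'),
    setIntegral_stadium_of_hasDerivAt_fst hα hβ hF hF' hFd,
    setIntegral_stadium_of_hasDerivAt_snd hα hβ hG hG' hGd, add_left_comm, ← mul_add,
    ← intervalIntegral.integral_add (Continuous.intervalIntegrable (by fun_prop) _ _)
      (Continuous.intervalIntegrable (by fun_prop) _ _), bdryInt]
  congr 3 <;> ext <;> ring

end Divergence

section PartialDerivatives

variable {u v : ℝ × ℝ → ℝ} {p : ℝ × ℝ}

lemma hasDerivAt_comp_fst (hv : DifferentiableAt ℝ v p) :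
    HasDerivAt (fun t ↦ v (t, p.2)) (fderiv ℝ v p (1, 0)) p.1 :=
  hv.hasFDerivAt.comp_hasDerivAt p.1 ((hasDerivAt_id p.1).prodMk (hasDerivAt_const p.1 p.2))

lemma hasDerivAt_comp_snd (hv : DifferentiableAt ℝ v p) :
    HasDerivAt (fun t ↦ v (p.1, t)) (fderiv ℝ v p (0, 1)) p.2 :=
  hv.hasFDerivAt.comp_hasDerivAt p.2 ((hasDerivAt_const p.2 p.1).prodMk (hasDerivAt_id p.2))

lemma pdx_eq_fderiv (hv : DifferentiableAt ℝ v p) : pdx v p = fderiv ℝ v p (1, 0) :=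
  (hasDerivAt_comp_fst hv).deriv

lemma pdy_eq_fderiv (hv : DifferentiableAt ℝ v p) : pdy v p = fderiv ℝ v p (0, 1) :=
  (hasDerivAt_comp_snd hv).deriv

lemma hasDerivAt_pdx (hv : DifferentiableAt ℝ v p) :
    HasDerivAt (fun t ↦ v (t, p.2)) (pdx v p) p.1 :=
  (hasDerivAt_comp_fst hv).differentiableAt.hasDerivAt

lemma hasDerivAt_pdy (hv : DifferentiableAt ℝ v p) :
    HasDerivAt (fun t ↦ v (p.1, t)) (pdy v p) p.2 :=
  (hasDerivAt_comp_snd hv).differentiableAt.hasDerivAt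

lemma fderiv_apply_eq_pdx_add_pdy (hv : DifferentiableAt ℝ v p) (w : ℝ × ℝ) :
    fderiv ℝ v p w = w.1 * pdx v p + w.2 * pdy v p := by
  have hw : w = w.1 • ((1, 0) : ℝ × ℝ) + w.2 • ((0, 1) : ℝ × ℝ) := by simp
  rw [pdx_eq_fderiv hv, pdy_eq_fderiv hv]
  nth_rw 1 [hw]
  rw [map_add, map_smul, map_smul, smul_eq_mul, smul_eq_mul]

lemma contDiff_pdx {m n : WithTop ℕ∞} (hv : ContDiff ℝ n v) (hmn : m + 1 ≤ n) :
    ContDiff ℝ m (pdx v) := by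
  have hn : n ≠ 0 := by rintro rfl; simp at hmn
  rw [show pdx v = fun p ↦ fderiv ℝ v p (1, 0) from
    funext fun p ↦ pdx_eq_fderiv (hv.differentiable hn p)]
  exact (hv.fderiv_right hmn).clm_apply contDiff_const

lemma contDiff_pdy {m n : WithTop ℕ∞} (hv : ContDiff ℝ n v) (hmn : m + 1 ≤ n) :
    ContDiff ℝ m (pdy v) := by
  have hn : n ≠ 0 := by rintro rfl; simp at hmn
  rw [show pdy v = fun p ↦ fderiv ℝ v p (0, 1) from
    funext fun p ↦ pdy_eq_fderiv (hv.differentiable hn p)]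
  exact (hv.fderiv_right hmn).clm_apply contDiff_const

lemma continuous_lap (hv : ContDiff ℝ 2 v) : Continuous (lap v) :=
  (contDiff_pdx (m := 0) (contDiff_pdx (m := 1) hv le_rfl) (by simp)).continuous.neg.sub
    (contDiff_pdy (m := 0) (contDiff_pdy (m := 1) hv le_rfl) (by simp)).continuous

lemma pdx_pdy_comm (hv : ContDiff ℝ 2 v) (p : ℝ × ℝ) : pdx (pdy v) p = pdy (pdx v) p := by
  have hv1 : Differentiable ℝ v := hv.differentiable two_ne_zero
  have hd : DifferentiableAt ℝ (fderiv ℝ v) p :=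
    (hv.fderiv_right (m := 1) le_rfl).differentiable one_ne_zero p
  have hsecond (w w' : ℝ × ℝ) :
      fderiv ℝ (fun q ↦ fderiv ℝ v q w) p w' = fderiv ℝ (fderiv ℝ v) p w' w := by
    simp [fderiv_clm_apply hd (differentiableAt_const w)]
  have hsymm : IsSymmSndFDerivAt ℝ v p := hv.contDiffAt.isSymmSndFDerivAt (by simp)
  rw [pdx_eq_fderiv ((contDiff_pdy (m := 1) hv le_rfl).differentiable one_ne_zero p),
    pdy_eq_fderiv ((contDiff_pdx (m := 1) hv le_rfl).differentiable one_ne_zero p),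
    show pdx v = fun p ↦ fderiv ℝ v p (1, 0) from funext fun p ↦ pdx_eq_fderiv (hv1 p),
    show pdy v = fun p ↦ fderiv ℝ v p (0, 1) from funext fun p ↦ pdy_eq_fderiv (hv1 p),
    hsecond, hsecond]
  exact hsymm _ _

lemma pdx_eventuallyEq (h : v =ᶠ[nhds p] u) : pdx v =ᶠ[nhds p] pdx u := by
  filter_upwards [h.eventually_nhds] with q hq
  have hline : Tendsto (fun t ↦ (t, q.2)) (nhds q.1) (nhds q) :=
    Continuous.tendsto (f := fun t ↦ (t, q.2)) (by fun_prop) q.1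
  exact EventuallyEq.deriv_eq (hline.eventually hq)

lemma pdy_eventuallyEq (h : v =ᶠ[nhds p] u) : pdy v =ᶠ[nhds p] pdy u := by
  filter_upwards [h.eventually_nhds] with q hq
  have hline : Tendsto (fun t ↦ (q.1, t)) (nhds q.2) (nhds q) :=
    Continuous.tendsto (f := fun t ↦ (q.1, t)) (by fun_prop) q.2
  exact EventuallyEq.deriv_eq (hline.eventually hq)

lemma lap_congr (h : v =ᶠ[nhds p] u) : lap v p = lap u p := by
  rw [lap, lap, (pdx_eventuallyEq (pdx_eventuallyEq h)).self_of_nhds,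
    (pdy_eventuallyEq (pdy_eventuallyEq h)).self_of_nhds]

lemma nderiv_congr (h : v =ᶠ[nhds p] u) (n : ℝ × ℝ) : nderiv v p n = nderiv u p n := by
  rw [nderiv, nderiv, (pdx_eventuallyEq h).self_of_nhds, (pdy_eventuallyEq h).self_of_nhds]

end PartialDerivatives

section Dirichlet

variable {α β : ℝ} {v : ℝ × ℝ → ℝ}

lemma OutwardNormal.pdx_and_pdy_eq_nderiv_mul (hα : 0 ≤ α) (hβ : 0 < β) {p n : ℝ × ℝ}
    (hn : OutwardNormal α β p n) (hv : DifferentiableAt ℝ v p)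
    (hv0 : ∀ q ∈ StadiumBoundary α β, v q = 0) :
    pdx v p = nderiv v p n * n.1 ∧ pdy v p = nderiv v p n * n.2 := by
  obtain ⟨γ, t, c, rfl, hc, hγ, hmem⟩ := hn.exists_tangent_curve hα hβ
  have hzero : v ∘ γ =ᶠ[nhds t] fun _ ↦ 0 := hmem.mono fun s hs ↦ hv0 _ hs
  have hderiv : fderiv ℝ v (γ t) (c • (-n.2, n.1)) = 0 :=
    (hv.hasFDerivAt.comp_hasDerivAt t hγ).unique
      ((hasDerivAt_const t (0 : ℝ)).congr_of_eventuallyEq hzero)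
  have htangent : -n.2 * pdx v (γ t) + n.1 * pdy v (γ t) = 0 := by
    rw [map_smul, fderiv_apply_eq_pdx_add_pdy hv] at hderiv
    exact (smul_eq_zero.1 hderiv).resolve_left hc
  have hunit := hn.sq_add_sq
  constructor <;> rw [nderiv]
  · linear_combination -pdx v (γ t) * hunit - n.2 * htangent
  · linear_combination -pdy v (γ t) * hunit + n.1 * htangent

theorem setIntegral_sq_le_setIntegral_pdx_sq (hα : 0 ≤ α) (hβ : 0 ≤ β) (hv : ContDiff ℝ 1 v)
    (hv0 : ∀ p ∈ StadiumBoundary α β, v p = 0) :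
    ∫ p in Stadium α β, v p ^ 2 ≤ 4 * (α + β) ^ 2 * ∫ p in Stadium α β, pdx v p ^ 2 := by
  have hvc : Continuous v := hv.continuous
  have hxc : Continuous (pdx v) := (contDiff_pdx (m := 0) hv (by simp)).continuous
  have hi {φ : ℝ × ℝ → ℝ} (hφ : Continuous φ) : IntegrableOn φ (Stadium α β) :=
    integrableOn_stadium hα hβ hφ
  have hdiv : ∫ p in Stadium α β, (v p ^ 2 + p.1 * (2 * v p * pdx v p) + 0) = 0 := by
    rw [setIntegral_stadium_divergence hα hβ (F := fun p ↦ p.1 * v p ^ 2) (G := fun _ ↦ 0)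
      (F' := fun p ↦ v p ^ 2 + p.1 * (2 * v p * pdx v p)) (G' := fun _ ↦ 0)
      (by fun_prop) (by fun_prop) (by fun_prop) (by fun_prop) (fun x y ↦ ?_)
      (fun _ y ↦ hasDerivAt_const y 0), bdryInt_congr (h := fun _ _ ↦ 0) hα fun p n hn ↦ ?_]
    · simp [bdryInt]
    · simp [hv0 p (hn.mem_stadiumBoundary hα hβ)]
    · exact ((hasDerivAt_id x).mul
        ((hasDerivAt_pdx (hv.differentiable one_ne_zero (x, y))).pow 2)).congr_deriv (by simp)
  have hpointwise : ∀ p ∈ Stadium α β, v p ^ 2 ≤ 4 * (α + β) ^ 2 * pdx v p ^ 2 +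
      2 * (v p ^ 2 + p.1 * (2 * v p * pdx v p) + 0) := fun p hp ↦ by
    have hx := mul_le_mul_of_nonneg_right (sq_fst_le_of_mem_stadium hα hβ hp) (sq_nonneg (pdx v p))
    linarith [sq_nonneg (v p + 2 * p.1 * pdx v p)]
  calc ∫ p in Stadium α β, v p ^ 2
    _ ≤ ∫ p in Stadium α β, (4 * (α + β) ^ 2 * pdx v p ^ 2 +
          2 * (v p ^ 2 + p.1 * (2 * v p * pdx v p) + 0)) :=
      setIntegral_mono_on (hi (by fun_prop)) (hi (by fun_prop))
        (isCompact_stadium hα hβ).measurableSet hpointwise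
    _ = 4 * (α + β) ^ 2 * ∫ p in Stadium α β, pdx v p ^ 2 := by
      rw [integral_add (hi (by fun_prop)) (hi (by fun_prop)), integral_const_mul,
        integral_const_mul, hdiv, mul_zero, add_zero]

theorem setIntegral_rellich_eq_bdryInt (hα : 0 ≤ α) (hβ : 0 ≤ β) (hv : ContDiff ℝ 2 v) (E : ℝ) :
    ∫ p in Stadium α β, (2 * pdx v p ^ 2 - (2 * p.1 * pdx v p + v p) * (lap v p - E * v p)) =
      bdryInt α β (fun p n ↦
        n.1 * (p.1 * (pdx v p ^ 2 - pdy v p ^ 2 + E * v p ^ 2) + v p * pdx v p) +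
        n.2 * (2 * p.1 * (pdx v p * pdy v p) + v p * pdy v p)) := by
  have hx : ContDiff ℝ 1 (pdx v) := contDiff_pdx hv le_rfl
  have hy : ContDiff ℝ 1 (pdy v) := contDiff_pdy hv le_rfl
  have hxx : Continuous (pdx (pdx v)) := (contDiff_pdx (m := 0) hx (by simp)).continuous
  have hyx : Continuous (pdy (pdx v)) := (contDiff_pdy (m := 0) hx (by simp)).continuous
  have hyy : Continuous (pdy (pdy v)) := (contDiff_pdy (m := 0) hy (by simp)).continuous
  have hvc := hv.continuous
  have hxc := hx.continuous
  have hyc := hy.continuous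
  have hvd := hv.differentiable two_ne_zero
  have hxd := hx.differentiable one_ne_zero
  have hyd := hy.differentiable one_ne_zero
  rw [← setIntegral_stadium_divergence hα hβ
    (F' := fun p ↦ pdx v p ^ 2 - pdy v p ^ 2 + E * v p ^ 2 + p.1 * (2 * pdx v p * pdx (pdx v) p -
      2 * pdy v p * pdy (pdx v) p + E * (2 * v p * pdx v p)) +
      (pdx v p * pdx v p + v p * pdx (pdx v) p))
    (G' := fun p ↦ 2 * p.1 * (pdy (pdx v) p * pdy v p + pdx v p * pdy (pdy v) p) +
      (pdy v p * pdy v p + v p * pdy (pdy v) p))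
    (by fun_prop) (by fun_prop) (by fun_prop) (by fun_prop) (fun x y ↦ ?_) (fun x y ↦ ?_)]
  · congr 1 with p
    rw [lap]
    ring
  · have hdx := hasDerivAt_pdx (hxd (x, y))
    have hdy := hasDerivAt_pdx (hyd (x, y))
    rw [pdx_pdy_comm hv] at hdy
    have hdv := hasDerivAt_pdx (hvd (x, y))
    exact (((hasDerivAt_id x).mul (((hdx.pow 2).sub (hdy.pow 2)).add
      ((hdv.pow 2).const_mul E))).add (hdv.mul hdx)).congr_deriv (by simp)
  · have hdv := hasDerivAt_pdy (hvd (x, y))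
    have hdy := hasDerivAt_pdy (hyd (x, y))
    exact (((hasDerivAt_pdy (hxd (x, y))).mul hdy).const_mul (2 * x)).add (hdv.mul hdy)

theorem setIntegral_rellich_of_dirichlet (hα : 0 ≤ α) (hβ : 0 < β) (hv : ContDiff ℝ 2 v)
    (hv0 : ∀ p ∈ StadiumBoundary α β, v p = 0) (E : ℝ) :
    ∫ p in Stadium α β, (2 * pdx v p ^ 2 - (2 * p.1 * pdx v p + v p) * (lap v p - E * v p)) =
      bdryInt α β (fun p n ↦ p.1 * n.1 * nderiv v p n ^ 2) := by
  rw [setIntegral_rellich_eq_bdryInt hα hβ.le hv]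
  refine bdryInt_congr hα fun p n hn ↦ ?_
  obtain ⟨hpx, hpy⟩ :=
    hn.pdx_and_pdy_eq_nderiv_mul hα hβ (hv.differentiable two_ne_zero p) hv0
  rw [hpx, hpy, hv0 p (hn.mem_stadiumBoundary hα hβ.le)]
  linear_combination p.1 * n.1 * nderiv v p n ^ 2 * hn.sq_add_sq

lemma rellich_cross_term_le {A x a b f : ℝ} (hA : 0 < A) (hx : x ^ 2 ≤ A ^ 2) :
    (2 * x * a + b) * f ≤ a ^ 2 / 2 + (8 * A ^ 2)⁻¹ * b ^ 2 + 4 * A ^ 2 * f ^ 2 := by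
  have hfirst : 2 * x * a * f ≤ a ^ 2 / 2 + 2 * A ^ 2 * f ^ 2 := by
    linarith [sq_nonneg (a - 2 * x * f), mul_le_mul_of_nonneg_right hx (sq_nonneg f)]
  have hzeroth : b * f ≤ (8 * A ^ 2)⁻¹ * b ^ 2 + 2 * A ^ 2 * f ^ 2 := by
    have hsq : (8 * A ^ 2)⁻¹ * (b - 8 * A ^ 2 * (f / 2)) ^ 2 =
        (8 * A ^ 2)⁻¹ * b ^ 2 - b * f + 2 * A ^ 2 * f ^ 2 := by
      field_simp
      ring
    have hsq_nonneg : 0 ≤ (8 * A ^ 2)⁻¹ * (b - 8 * A ^ 2 * (f / 2)) ^ 2 := by positivity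
    linarith
  linarith

lemma setIntegral_pdx_sq_le_bdryInt_add (hα : 0 ≤ α) (hβ : 0 < β) (hv : ContDiff ℝ 2 v)
    (hv0 : ∀ p ∈ StadiumBoundary α β, v p = 0) (E : ℝ) :
    ∫ p in Stadium α β, pdx v p ^ 2 ≤ bdryInt α β (fun p n ↦ p.1 * n.1 * nderiv v p n ^ 2) +
      4 * (α + β) ^ 2 * ∫ p in Stadium α β, (lap v p - E * v p) ^ 2 := by
  set A := α + β
  have hA : 0 < A := by positivity
  set f : ℝ × ℝ → ℝ := fun p ↦ lap v p - E * v p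
  have hvc := hv.continuous
  have hxc := (contDiff_pdx (m := 1) hv le_rfl).continuous
  have hfc : Continuous f := (continuous_lap hv).sub (hvc.const_mul E)
  have hi {φ : ℝ × ℝ → ℝ} (hφ : Continuous φ) : IntegrableOn φ (Stadium α β) :=
    integrableOn_stadium hα hβ.le hφ
  have hpointwise : ∀ p ∈ Stadium α β,
      3 / 2 * pdx v p ^ 2 - (8 * A ^ 2)⁻¹ * v p ^ 2 - 4 * A ^ 2 * f p ^ 2 ≤
        2 * pdx v p ^ 2 - (2 * p.1 * pdx v p + v p) * f p := fun p hp ↦ by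
    linarith [rellich_cross_term_le (a := pdx v p) (b := v p) (f := f p) hA
      (sq_fst_le_of_mem_stadium hα hβ.le hp)]
  have hbound := setIntegral_mono_on (hi (by fun_prop)) (hi (by fun_prop))
    (isCompact_stadium hα hβ.le).measurableSet hpointwise
  rw [setIntegral_rellich_of_dirichlet hα hβ hv hv0 E,
    integral_sub (hi (by fun_prop)) (hi (by fun_prop)),
    integral_sub (hi (by fun_prop)) (hi (by fun_prop)), integral_const_mul, integral_const_mul,
    integral_const_mul] at hbound
  have hpoincare : (8 * A ^ 2)⁻¹ * ∫ p in Stadium α β, v p ^ 2 ≤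
      1 / 2 * ∫ p in Stadium α β, pdx v p ^ 2 := by
    rw [inv_mul_le_iff₀ (by positivity)]
    linarith [setIntegral_sq_le_setIntegral_pdx_sq hα hβ.le (hv.of_le one_le_two) hv0]
  linarith

theorem setIntegral_sq_le_bdryIntW_add (hα : 0 ≤ α) (hβ : 0 < β) (hv : ContDiff ℝ 2 v)
    (hv0 : ∀ p ∈ StadiumBoundary α β, v p = 0) (E : ℝ) :
    ∫ p in Stadium α β, v p ^ 2 ≤ 4 * (α + β) ^ 2 *
      ((α + β) / β * bdryIntW α β (fun p n ↦ (|p.1| - α) * nderiv v p n ^ 2) +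
        4 * (α + β) ^ 2 * ∫ p in Stadium α β, (lap v p - E * v p) ^ 2) := by
  have hnderiv : Continuous fun q : (ℝ × ℝ) × ℝ × ℝ ↦ nderiv v q.1 q.2 := by
    have hxc : Continuous (pdx v) := (contDiff_pdx (m := 1) hv le_rfl).continuous
    have hyc : Continuous (pdy v) := (contDiff_pdy (m := 1) hv le_rfl).continuous
    unfold nderiv
    fun_prop
  have hflux := bdryInt_fst_mul_normal_le (g := fun p n ↦ nderiv v p n ^ 2) hα hβ
    (hnderiv.pow 2) fun _ _ ↦ sq_nonneg _
  refine (setIntegral_sq_le_setIntegral_pdx_sq hα hβ.le (hv.of_le one_le_two) hv0).trans ?_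
  gcongr
  exact (setIntegral_pdx_sq_le_bdryInt_add hα hβ hv hv0 E).trans (by gcongr)

end Dirichlet

lemma exists_contDiff_eventuallyEq {X Y : Type*} [NormedAddCommGroup X] [NormedSpace ℝ X]
    [FiniteDimensional ℝ X] [NormedAddCommGroup Y] [NormedSpace ℝ Y] {n : ℕ∞} {S V : Set X}
    (hS : IsClosed S) (hV : IsOpen V) (hSV : S ⊆ V) {u : X → Y} (hu : ContDiffOn ℝ n u V) :
    ∃ v : X → Y, ContDiff ℝ n v ∧ ∀ p ∈ S, v =ᶠ[nhds p] u := by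
  obtain ⟨χ, hχ0, hχ1, -⟩ := exists_contMDiffMap_zero_one_nhds_of_isClosed
    (modelWithCornersSelf ℝ X) (n := n) hV.isClosed_compl hS
    (disjoint_compl_left_iff_subset.2 hSV)
  have hχ : ContDiff ℝ n χ := χ.contMDiff.contDiff
  refine ⟨fun p ↦ χ p • u p, contDiff_iff_contDiffAt.2 fun p ↦ ?_, fun p hp ↦ ?_⟩
  · by_cases hp : p ∈ V
    · exact hχ.contDiffAt.smul (hu.contDiffAt (hV.mem_nhds hp))
    · refine (contDiffAt_const (c := (0 : Y))).congr_of_eventuallyEq ?_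
      filter_upwards [eventually_nhdsSet_iff_forall.1 hχ0 p hp] with q hq
      rw [hq, zero_smul]
  · filter_upwards [eventually_nhdsSet_iff_forall.1 hχ1 p hp] with q hq
    rw [hq, one_smul]

theorem stmt10_general {α β : ℝ} (hα : 0 ≤ α) (hβ : 0 < β) :
    ∃ C > 0, ∀ (u f : ℝ × ℝ → ℝ) (E : ℝ) (V : Set (ℝ × ℝ)), IsOpen V → Stadium α β ⊆ V →
      ContDiffOn ℝ 2 u V → (∀ p ∈ StadiumBoundary α β, u p = 0) →
      (∀ p ∈ Stadium α β, lap u p - E * u p = f p) →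
      ∫ p in Stadium α β, u p ^ 2 ≤
        C * (bdryIntW α β (fun p n ↦ (|p.1| - α) * nderiv u p n ^ 2) +
          ∫ p in Stadium α β, f p ^ 2) := by
  refine ⟨4 * (α + β) ^ 2 * ((α + β) / β + 4 * (α + β) ^ 2), by positivity,
    fun u f E V hV hSV hu hu0 heq ↦ ?_⟩
  have hS := isCompact_stadium hα hβ.le
  have hbdry := stadiumBoundary_subset_stadium hα hβ.le
  obtain ⟨v, hv, hvu⟩ := exists_contDiff_eventuallyEq (n := 2) hS.isClosed hV hSV hu
  have hv0 : ∀ p ∈ StadiumBoundary α β, v p = 0 := fun p hp ↦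
    (hvu p (hbdry hp)).self_of_nhds.trans (hu0 p hp)
  have hmass : ∫ p in Stadium α β, v p ^ 2 = ∫ p in Stadium α β, u p ^ 2 :=
    setIntegral_congr_fun hS.measurableSet fun p hp ↦ by rw [(hvu p hp).self_of_nhds]
  have herror : ∫ p in Stadium α β, (lap v p - E * v p) ^ 2 = ∫ p in Stadium α β, f p ^ 2 :=
    setIntegral_congr_fun hS.measurableSet fun p hp ↦ by
      rw [lap_congr (hvu p hp), (hvu p hp).self_of_nhds, heq p hp]
  have hflux : bdryIntW α β (fun p n ↦ (|p.1| - α) * nderiv v p n ^ 2) =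
      bdryIntW α β (fun p n ↦ (|p.1| - α) * nderiv u p n ^ 2) :=
    bdryIntW_congr fun p n hn ↦ by
      rw [nderiv_congr (hvu p (hbdry (hn.mem_stadiumBoundary hα hβ.le)))]
  have hmain := setIntegral_sq_le_bdryIntW_add hα hβ hv hv0 E
  rw [hmass, herror, hflux] at hmain
  have hflux_nonneg := bdryIntW_weight_mul_nonneg (g := fun p n ↦ nderiv u p n ^ 2) hα hβ.le
    fun _ _ ↦ sq_nonneg _
  have herror_nonneg : 0 ≤ ∫ p in Stadium α β, f p ^ 2 := integral_nonneg fun _ ↦ sq_nonneg _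
  set W := bdryIntW α β (fun p n ↦ (|p.1| - α) * nderiv u p n ^ 2)
  set I := ∫ p in Stadium α β, f p ^ 2
  have hcross : 0 ≤ 4 * (α + β) ^ 2 * ((α + β) / β * I + 4 * (α + β) ^ 2 * W) := by positivity
  linarith

/-- there is `C > 0` depending only on `α, β` such that every real Dirichlet
quasimode datum satisfies `‖u‖²_{L²(S)} ≤ C (∫_{∂S ∩ W} w |∂_N u|² dl + ‖f‖²_{L²(S)})`. -/
theorem stmt10 (α β : ℝ) (hα : 0 < α) (hβ : 0 < β) :
    ∃ C > 0, ∀ d : QMDatum α β,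
      (∫ p in Stadium α β, (d.u p) ^ 2) ≤
        C * (bdryIntW α β (fun p n => (|p.1| - α) * (nderiv d.u p n) ^ 2) +
             (∫ p in Stadium α β, (d.f p) ^ 2)) := by
  obtain ⟨C, hC, h⟩ := stmt10_general hα.le hβ
  exact ⟨C, hC, fun d ↦ have ⟨V, hV, hSV, hu⟩ := d.smooth
    h d.u d.f (d.lam ^ 2) V hV hSV (contDiffOn_infty.1 hu 2) d.dirichlet d.eqn⟩
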